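/- Let H and M be hpd n×n complex matrices and N a skew-Wellian—skew-Hermitian—n×n complex matrix. Then ρ(NH) ≤ ρ(M⁻¹N) · λ_max(HM). Consequently, the rectangle Ω₁ := [λ_min(HM), λ_max(HM)] + i[−ρ(NH), ρ(NH)] is contained in the rectangle Ω₂ := [λ_min(HM), λ_max(HM)] + i[−ρ(M⁻¹N)λ_max(HM), ρ(M⁻¹N)λ_max(HM)]. -/

import Mathlib

open Matrix
open scoped ComplexOrder

theorem aux_spectrum_mul_comm {n : ℕ} (A B : Matrix (Fin n) (Fin n) ℂ) :
    spectrum ℂ (A * B) = spectrum ℂ (B * A) := by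
  ext z
  rw [Matrix.mem_spectrum_iff_isRoot_charpoly, Matrix.mem_spectrum_iff_isRoot_charpoly,
    Matrix.charpoly_mul_comm]

section

open scoped Matrix.Norms.L2Operator MatrixOrder

theorem aux_exists_norm {n : ℕ} [Nonempty (Fin n)] (A : Matrix (Fin n) (Fin n) ℂ)
    (hA : IsStarNormal A) : ∃ z ∈ spectrum ℂ A, ‖z‖ = ‖A‖ := by
  obtain ⟨z, hz, h⟩ := spectrum.exists_nnnorm_eq_spectralRadius A
  refine ⟨z, hz, ?_⟩
  rw [IsStarNormal.spectralRadius_eq_nnnorm] at h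
  have h2 : ‖z‖₊ = ‖A‖₊ := by exact_mod_cast h
  exact congrArg NNReal.toReal h2

theorem aux_factor {n : ℕ} (A : Matrix (Fin n) (Fin n) ℂ) (hA : A.PosDef) :
    ∃ B : Matrix (Fin n) (Fin n) ℂ, A = Bᴴ * B := by
  obtain ⟨B, hB⟩ := CStarAlgebra.nonneg_iff_eq_star_mul_self.mp hA.posSemidef.nonneg
  exact ⟨B, hB⟩

theorem aux_norm {n : ℕ} (E S : Matrix (Fin n) (Fin n) ℂ) :
    ‖Eᴴ * S * E‖ ≤ ‖S‖ * (‖E‖ * ‖E‖) := by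
  have h1 := Matrix.l2_opNorm_mul (Eᴴ * S) E
  have h2 := Matrix.l2_opNorm_mul Eᴴ S
  rw [Matrix.l2_opNorm_conjTranspose] at h2
  have h3 := mul_le_mul_of_nonneg_right h2 (norm_nonneg E)
  linarith

theorem aux_main {n : ℕ} [Nonempty (Fin n)]
    (H M N : Matrix (Fin n) (Fin n) ℂ) (hH : H.PosDef) (hM : M.PosDef)
    (hN : Nᴴ = -N) (z : ℂ) (hz : z ∈ spectrum ℂ (N * H)) :
    ∃ w ∈ spectrum ℂ (M⁻¹ * N), ∃ r : ℝ, (r : ℂ) ∈ spectrum ℂ (H * M) ∧ 0 ≤ r ∧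
      ‖z‖ ≤ ‖w‖ * r := by
  obtain ⟨B, rfl⟩ := aux_factor M hM
  obtain ⟨D, rfl⟩ := aux_factor H hH
  have hdet : IsUnit B.det := by
    have := (Matrix.isUnit_iff_isUnit_det _).mp hM.isUnit
    rw [Matrix.det_mul] at this
    exact isUnit_of_mul_isUnit_right this
  have hdet' : IsUnit (Bᴴ).det := by
    rw [Matrix.det_conjTranspose]; exact hdet.star
  set S := (Bᴴ)⁻¹ * N * B⁻¹ with hS
  set E := B * Dᴴ with hE
  have hSs : star S = -S := by
    rw [hS, Matrix.star_eq_conjTranspose]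
    simp only [Matrix.conjTranspose_mul, Matrix.conjTranspose_nonsing_inv,
      Matrix.conjTranspose_conjTranspose, hN]
    simp [Matrix.mul_assoc]
  have hSn : IsStarNormal S := ⟨by rw [hSs]; exact (Commute.refl S).neg_left⟩
  obtain ⟨w, hw, hwn⟩ := aux_exists_norm S hSn
  have hEn : IsStarNormal (Eᴴ * E) :=
    (IsSelfAdjoint.star_mul_self E).isStarNormal
  obtain ⟨r, hr, hrn⟩ := aux_exists_norm (Eᴴ * E) hEn
  have hr0 : 0 ≤ r := (Matrix.posSemidef_iff_isHermitian_and_spectrum_nonneg.mp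
    (Matrix.posSemidef_conjTranspose_mul_self E)).2 hr
  have hrr : ((‖r‖ : ℝ) : ℂ) = r := Complex.norm_of_nonneg' hr0
  have hEE : Eᴴ * E = D * (Bᴴ * B * Dᴴ) := by
    simp [hE, Matrix.conjTranspose_mul, Matrix.mul_assoc]
  refine ⟨w, ?_, ‖r‖, ?_, norm_nonneg _, ?_⟩
  · rw [hS, aux_spectrum_mul_comm] at hw
    rwa [Matrix.mul_inv_rev, Matrix.mul_assoc]
  · rw [hrr]
    rw [hEE, aux_spectrum_mul_comm, Matrix.mul_assoc, aux_spectrum_mul_comm] at hr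
    exact hr
  · have hX : Eᴴ * S * E = D * (N * Dᴴ) := by
      have h1 : Eᴴ * S * E = D * (Bᴴ * (Bᴴ)⁻¹) * N * (B⁻¹ * B) * Dᴴ := by
        simp only [hE, hS, Matrix.conjTranspose_mul, Matrix.conjTranspose_conjTranspose,
          Matrix.mul_assoc]
      rw [h1, Matrix.mul_nonsing_inv _ hdet', Matrix.nonsing_inv_mul _ hdet]
      simp [Matrix.mul_assoc]
    rw [← Matrix.mul_assoc, aux_spectrum_mul_comm, ← hX] at hz
    have hle := spectrum.norm_le_norm_of_mem hz
    rw [hwn, hrn, Matrix.l2_opNorm_conjTranspose_mul_self]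
    exact hle.trans (aux_norm E S)

end

theorem aux_le {n : ℕ}
    (H M N : Matrix (Fin n) (Fin n) ℂ) (hH : H.PosDef) (hM : M.PosDef)
    (hN : Nᴴ = -N) :
    sSup (norm '' spectrum ℂ (N * H)) ≤
      sSup (norm '' spectrum ℂ (M⁻¹ * N)) *
        sSup {r : ℝ | (r : ℂ) ∈ spectrum ℂ (H * M)} := by
  rcases isEmpty_or_nonempty (Fin n) with h | h
  · simp [spectrum.of_subsingleton]
  have b1 : BddAbove (norm '' spectrum ℂ (M⁻¹ * N)) :=
    ((Matrix.finite_spectrum _).image _).bddAbove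
  have b2 : BddAbove {r : ℝ | (r : ℂ) ∈ spectrum ℂ (H * M)} :=
    ((Matrix.finite_spectrum (H * M)).preimage Complex.ofReal_injective.injOn).bddAbove
  have hne : (spectrum ℂ (N * H)).Nonempty := spectrum.nonempty_of_isAlgClosed_of_finiteDimensional ℂ _
  apply csSup_le (hne.image _)
  rintro _ ⟨z, hz, rfl⟩
  obtain ⟨w, hw, r, hr, hr0, hle⟩ := aux_main H M N hH hM hN z hz
  have h1 := le_csSup b1 ⟨w, hw, rfl⟩
  have h2 := le_csSup b2 hr
  exact hle.trans (mul_le_mul h1 h2 hr0 ((norm_nonneg _).trans h1))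

/-- For hpd `H`, `M` and skew-Hermitian `N`,
`ρ(NH) ≤ ρ(M⁻¹N) · λ_max(HM)`, and consequently the rectangle
`Ω₁ = [λ_min(HM), λ_max(HM)] + i[−ρ(NH), ρ(NH)]` is contained in the rectangle
`Ω₂ = [λ_min(HM), λ_max(HM)] + i[−ρ(M⁻¹N)λ_max(HM), ρ(M⁻¹N)λ_max(HM)]`. -/
theorem rectangle_Omega1_subset_Omega2 {n : ℕ}
    (H M N : Matrix (Fin n) (Fin n) ℂ) (hH : H.PosDef) (hM : M.PosDef)
    (hN : Nᴴ = -N) :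
    sSup (norm '' spectrum ℂ (N * H)) ≤
      sSup (norm '' spectrum ℂ (M⁻¹ * N)) *
        sSup {r : ℝ | (r : ℂ) ∈ spectrum ℂ (H * M)} ∧
    {z : ℂ | sInf {r : ℝ | (r : ℂ) ∈ spectrum ℂ (H * M)} ≤ z.re ∧
        z.re ≤ sSup {r : ℝ | (r : ℂ) ∈ spectrum ℂ (H * M)} ∧
        |z.im| ≤ sSup (norm '' spectrum ℂ (N * H))} ⊆
    {z : ℂ | sInf {r : ℝ | (r : ℂ) ∈ spectrum ℂ (H * M)} ≤ z.re ∧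
        z.re ≤ sSup {r : ℝ | (r : ℂ) ∈ spectrum ℂ (H * M)} ∧
        |z.im| ≤ sSup (norm '' spectrum ℂ (M⁻¹ * N)) *
          sSup {r : ℝ | (r : ℂ) ∈ spectrum ℂ (H * M)}} := by
  have h := aux_le H M N hH hM hN
  exact ⟨h, fun z hz => ⟨hz.1, hz.2.1, hz.2.2.trans h⟩⟩
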